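/- arXiv:2309.15713 — 2 statements merged into one kernel-verified Lean document; each statement's English description precedes it below -/
import Mathlib

section
/- Let B > 0, 0 < a < L, v0 < 0, and let v : ℝ → ℝ be continuous with v0 ≤ v(r) ≤ 0 for all r ≥ 0 and v(r) = 0 for all r ≥ a. Then B·L² − B·L·a ≤ S ≤ B·L² + 2√(−v0)·L + γ0, where γ0 = ∫_0^a √(v(r) − v0) dr. -/
open MeasureTheory Real

/-!
Since `v` vanishes beyond `a < L`, the reflection `r ↦ 2L - r` turns the correction in `S` into
`d(L, 2L)` minus the distance from `0` to `L` for the potential `0`. Potentials `v ≤ 0` only shorten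
distances, so `S ≤ d(0, 2L)`; and the distance for the potential `0` grows when an interval is
moved outwards, so the outer piece `(2L - a, 2L)` pays for `(0, a)` and `d(a, 2L - a) ≤ S`.
Both bounds then come from `B r / 2 ≤ √(B² r² / 4 + w) ≤ B r / 2 + √w` for `w ≥ 0`.
-/

open Set intervalIntegral

/-- The Agmon distance `d(r1, r2)` of the radial potential `v` at energy `v0` in a magnetic field of
strength `B`. The potential is an argument so that `v = 0` gives the distance of the field alone. -/
noncomputable def agmonDist (B v0 : ℝ) (v : ℝ → ℝ) (r1 r2 : ℝ) : ℝ :=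
  ∫ r in r1..r2, √(B ^ 2 * r ^ 2 / 4 + v r - v0)

/-- The quantity `S`: twice the Agmon distance from a well at `0` to the midpoint `L` towards a
second well at `2 * L`, plus the integral over `(0, L)` of the difference between the potential-free
Agmon weights centred at the second and at the first well. -/
noncomputable def tunnelingAction (B v0 : ℝ) (v : ℝ → ℝ) (L : ℝ) : ℝ :=
  2 * agmonDist B v0 v 0 L +
    ∫ r in (0 : ℝ)..L, (√(B ^ 2 * (2 * L - r) ^ 2 / 4 - v0) - √(B ^ 2 * r ^ 2 / 4 - v0))

theorem sqrt_sq_add_le_add_sqrt {x : ℝ} (hx : 0 ≤ x) (y : ℝ) : √(x ^ 2 + y) ≤ x + √y := by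
  rcases le_total 0 y with hy | hy
  · refine sqrt_le_iff.mpr ⟨by positivity, ?_⟩
    linarith [add_sq x √y, sq_sqrt hy, mul_nonneg hx (sqrt_nonneg y)]
  · rw [sqrt_eq_zero_of_nonpos hy, add_zero]
    exact sqrt_le_iff.mpr ⟨hx, by linarith⟩

theorem intervalIntegrable_sqrt {f : ℝ → ℝ} {μ : Measure ℝ} [IsLocallyFiniteMeasure μ] {a b : ℝ}
    (hf : IntervalIntegrable f μ a b) : IntervalIntegrable (fun x ↦ √(f x)) μ a b := by
  refine (intervalIntegrable_const (c := (1 : ℝ)).add hf.abs).mono_fun'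
    (continuous_sqrt.comp_aestronglyMeasurable hf.def'.aestronglyMeasurable)
    (Filter.Eventually.of_forall fun x ↦ ?_)
  calc ‖√(f x)‖ = √(f x) := norm_of_nonneg (sqrt_nonneg _)
    _ ≤ 1 + |f x| := sqrt_le_iff.mpr ⟨by positivity, by nlinarith [le_abs_self (f x), sq_abs (f x)]⟩

theorem integral_mul_div_two (c a b : ℝ) :
    ∫ x in a..b, c * x / 2 = c * (b ^ 2 - a ^ 2) / 4 := by
  rw [intervalIntegral.integral_div, intervalIntegral.integral_const_mul, integral_id]
  ring

section AgmonDist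

variable {B v0 : ℝ} {v w : ℝ → ℝ} {r1 r2 r3 : ℝ}

theorem intervalIntegrable_agmonDist_integrand (hv : IntervalIntegrable v volume r1 r2) :
    IntervalIntegrable (fun r ↦ √(B ^ 2 * r ^ 2 / 4 + v r - v0)) volume r1 r2 :=
  intervalIntegrable_sqrt <|
    ((Continuous.intervalIntegrable (by fun_prop) r1 r2).add hv).sub intervalIntegrable_const

theorem agmonDist_nonneg (h12 : r1 ≤ r2) : 0 ≤ agmonDist B v0 v r1 r2 :=
  integral_nonneg h12 fun _ _ ↦ sqrt_nonneg _

theorem agmonDist_add_agmonDist (h12 : IntervalIntegrable v volume r1 r2)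
    (h23 : IntervalIntegrable v volume r2 r3) :
    agmonDist B v0 v r1 r2 + agmonDist B v0 v r2 r3 = agmonDist B v0 v r1 r3 :=
  integral_add_adjacent_intervals (intervalIntegrable_agmonDist_integrand h12)
    (intervalIntegrable_agmonDist_integrand h23)

theorem agmonDist_zero_potential_add (r1 r2 r3 : ℝ) :
    agmonDist B v0 0 r1 r2 + agmonDist B v0 0 r2 r3 = agmonDist B v0 0 r1 r3 :=
  agmonDist_add_agmonDist intervalIntegrable_const intervalIntegrable_const

theorem agmonDist_congr (hvw : EqOn v w (uIcc r1 r2)) :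
    agmonDist B v0 v r1 r2 = agmonDist B v0 w r1 r2 :=
  integral_congr fun r hr ↦ by simp only [hvw hr]

theorem agmonDist_mono (h12 : r1 ≤ r2) (hv : IntervalIntegrable v volume r1 r2)
    (hw : IntervalIntegrable w volume r1 r2) (hvw : ∀ r ∈ Icc r1 r2, v r ≤ w r) :
    agmonDist B v0 v r1 r2 ≤ agmonDist B v0 w r1 r2 :=
  integral_mono_on h12 (intervalIntegrable_agmonDist_integrand hv)
    (intervalIntegrable_agmonDist_integrand hw) fun r hr ↦ sqrt_le_sqrt (by linarith [hvw r hr])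

theorem agmonDist_zero_potential_le_translate {h : ℝ} (h1 : 0 ≤ r1) (h12 : r1 ≤ r2)
    (hh : 0 ≤ h) :
    agmonDist B v0 0 r1 r2 ≤ agmonDist B v0 0 (r1 + h) (r2 + h) := by
  simp only [agmonDist, Pi.zero_apply, add_zero]
  rw [← integral_comp_add_right fun r ↦ √(B ^ 2 * r ^ 2 / 4 - v0)]
  refine integral_mono_on h12 (Continuous.intervalIntegrable (by fun_prop) _ _)
    (Continuous.intervalIntegrable (by fun_prop) _ _) fun r hr ↦ ?_
  have hr0 : 0 ≤ r := h1.trans hr.1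
  gcongr
  linarith

theorem le_agmonDist (h12 : r1 ≤ r2) (hv : IntervalIntegrable v volume r1 r2)
    (hv0 : ∀ r ∈ Icc r1 r2, v0 ≤ v r) :
    B * (r2 ^ 2 - r1 ^ 2) / 4 ≤ agmonDist B v0 v r1 r2 := by
  rw [← integral_mul_div_two]
  refine integral_mono_on h12 (Continuous.intervalIntegrable (by fun_prop) _ _)
    (intervalIntegrable_agmonDist_integrand hv) fun r hr ↦ le_sqrt_of_sq_le ?_
  linarith [hv0 r hr]

theorem agmonDist_le (hB : 0 ≤ B) (h1 : 0 ≤ r1) (h12 : r1 ≤ r2)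
    (hv : IntervalIntegrable v volume r1 r2) :
    agmonDist B v0 v r1 r2 ≤ B * (r2 ^ 2 - r1 ^ 2) / 4 + ∫ r in r1..r2, √(v r - v0) := by
  have linear_integrable : IntervalIntegrable (fun r ↦ B * r / 2) volume r1 r2 :=
    Continuous.intervalIntegrable (by fun_prop) _ _
  have sqrt_integrable : IntervalIntegrable (fun r ↦ √(v r - v0)) volume r1 r2 :=
    intervalIntegrable_sqrt (hv.sub intervalIntegrable_const)
  rw [← integral_mul_div_two, ← integral_add linear_integrable sqrt_integrable]
  refine integral_mono_on h12 (intervalIntegrable_agmonDist_integrand hv)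
    (linear_integrable.add sqrt_integrable) fun r hr ↦ ?_
  have hr0 : 0 ≤ r := h1.trans hr.1
  calc √(B ^ 2 * r ^ 2 / 4 + v r - v0) = √((B * r / 2) ^ 2 + (v r - v0)) := by ring_nf
    _ ≤ B * r / 2 + √(v r - v0) := sqrt_sq_add_le_add_sqrt (by positivity) _

end AgmonDist

section TunnelingAction

variable {B v0 a L : ℝ} {v : ℝ → ℝ}

theorem tunnelingAction_eq (B v0 : ℝ) (v : ℝ → ℝ) (L : ℝ) :
    tunnelingAction B v0 v L =
      2 * agmonDist B v0 v 0 L + agmonDist B v0 0 L (2 * L) - agmonDist B v0 0 0 L := by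
  have reflection : ∫ r in (0 : ℝ)..L, √(B ^ 2 * (2 * L - r) ^ 2 / 4 - v0) =
      ∫ r in L..2 * L, √(B ^ 2 * r ^ 2 / 4 - v0) := by
    rw [integral_comp_sub_left fun r ↦ √(B ^ 2 * r ^ 2 / 4 - v0)]
    ring_nf
  rw [tunnelingAction, integral_sub (Continuous.intervalIntegrable (by fun_prop) _ _)
    (Continuous.intervalIntegrable (by fun_prop) _ _), reflection]
  simp only [agmonDist, Pi.zero_apply, add_zero]
  ring

theorem intervalIntegrable_of_eq_zero_of_ge (hvsupp : ∀ r, a ≤ r → v r = 0) {r1 r2 : ℝ}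
    (h1 : a ≤ r1) (h2 : a ≤ r2) : IntervalIntegrable v volume r1 r2 :=
  (intervalIntegrable_const (c := (0 : ℝ))).congr fun r hr ↦
    (hvsupp r ((le_min h1 h2).trans hr.1.le)).symm

theorem agmonDist_eq_zero_potential (hvsupp : ∀ r, a ≤ r → v r = 0) {r1 r2 : ℝ}
    (h1 : a ≤ r1) (h2 : a ≤ r2) : agmonDist B v0 v r1 r2 = agmonDist B v0 0 r1 r2 :=
  agmonDist_congr fun r hr ↦ hvsupp r ((le_min h1 h2).trans hr.1)

theorem agmonDist_le_tunnelingAction (ha : 0 ≤ a) (haL : a ≤ L)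
    (hv : IntervalIntegrable v volume 0 a) (hvsupp : ∀ r, a ≤ r → v r = 0) :
    agmonDist B v0 v a (2 * L - a) ≤ tunnelingAction B v0 v L := by
  have outward : agmonDist B v0 0 0 a ≤ agmonDist B v0 0 (2 * L - a) (2 * L) := by
    simpa using agmonDist_zero_potential_le_translate (B := B) (v0 := v0) le_rfl ha
      (show 0 ≤ 2 * L - a by linarith)
  have split_v : agmonDist B v0 v 0 a + agmonDist B v0 0 a L = agmonDist B v0 v 0 L := by
    rw [← agmonDist_eq_zero_potential hvsupp le_rfl haL]
    exact agmonDist_add_agmonDist hv (intervalIntegrable_of_eq_zero_of_ge hvsupp le_rfl haL)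
  have inner_nonneg : 0 ≤ agmonDist B v0 v 0 a := agmonDist_nonneg ha
  have split_inner := agmonDist_zero_potential_add (B := B) (v0 := v0) 0 a L
  have split_middle := agmonDist_zero_potential_add (B := B) (v0 := v0) a L (2 * L - a)
  have split_outer := agmonDist_zero_potential_add (B := B) (v0 := v0) L (2 * L - a) (2 * L)
  rw [tunnelingAction_eq, agmonDist_eq_zero_potential hvsupp le_rfl (by linarith)]
  linarith

theorem tunnelingAction_le_agmonDist (hL : 0 ≤ L) (hv : IntervalIntegrable v volume 0 L)
    (hvub : ∀ r ∈ Icc 0 L, v r ≤ 0) (hvsupp : ∀ r, L ≤ r → v r = 0) :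
    tunnelingAction B v0 v L ≤ agmonDist B v0 v 0 (2 * L) := by
  have h2L : L ≤ 2 * L := by linarith
  calc tunnelingAction B v0 v L
      = 2 * agmonDist B v0 v 0 L + agmonDist B v0 0 L (2 * L) - agmonDist B v0 0 0 L :=
        tunnelingAction_eq B v0 v L
    _ ≤ agmonDist B v0 v 0 L + agmonDist B v0 0 L (2 * L) := by
        linarith [agmonDist_mono (B := B) (v0 := v0) (w := 0) hL hv intervalIntegrable_const hvub]
    _ = agmonDist B v0 v 0 L + agmonDist B v0 v L (2 * L) := by
        rw [agmonDist_eq_zero_potential hvsupp le_rfl h2L]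
    _ = agmonDist B v0 v 0 (2 * L) :=
        agmonDist_add_agmonDist hv (intervalIntegrable_of_eq_zero_of_ge hvsupp le_rfl h2L)

theorem le_tunnelingAction (ha : 0 ≤ a) (haL : a ≤ L) (hv0 : v0 ≤ 0)
    (hv : IntervalIntegrable v volume 0 a) (hvsupp : ∀ r, a ≤ r → v r = 0) :
    B * L ^ 2 - B * L * a ≤ tunnelingAction B v0 v L := by
  have haL' : a ≤ 2 * L - a := by linarith
  calc B * L ^ 2 - B * L * a = B * ((2 * L - a) ^ 2 - a ^ 2) / 4 := by ring
    _ ≤ agmonDist B v0 v a (2 * L - a) :=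
        le_agmonDist haL' (intervalIntegrable_of_eq_zero_of_ge hvsupp le_rfl haL')
          fun r hr ↦ hv0.trans_eq (hvsupp r hr.1).symm
    _ ≤ tunnelingAction B v0 v L := agmonDist_le_tunnelingAction ha haL hv hvsupp

theorem agmonDist_origin_le {R : ℝ} (hB : 0 ≤ B) (ha : 0 ≤ a) (haR : a ≤ R)
    (hv : IntervalIntegrable v volume 0 a) (hvsupp : ∀ r, a ≤ r → v r = 0) :
    agmonDist B v0 v 0 R ≤
      B * R ^ 2 / 4 + √(-v0) * (R - a) + ∫ r in (0 : ℝ)..a, √(v r - v0) := by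
  have inner_le := agmonDist_le (v0 := v0) hB le_rfl ha hv
  have outer_le : agmonDist B v0 0 a R ≤ B * (R ^ 2 - a ^ 2) / 4 + (R - a) * √(-v0) := by
    simpa using agmonDist_le (v := 0) (v0 := v0) hB ha haR intervalIntegrable_const
  rw [← agmonDist_add_agmonDist hv (intervalIntegrable_of_eq_zero_of_ge hvsupp le_rfl haR),
    agmonDist_eq_zero_potential hvsupp le_rfl haR]
  linarith

theorem tunnelingAction_le (hB : 0 ≤ B) (ha : 0 ≤ a) (haL : a ≤ L)
    (hv : IntervalIntegrable v volume 0 a) (hvub : ∀ r ∈ Icc 0 L, v r ≤ 0)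
    (hvsupp : ∀ r, a ≤ r → v r = 0) :
    tunnelingAction B v0 v L ≤
      B * L ^ 2 + √(-v0) * (2 * L - a) + ∫ r in (0 : ℝ)..a, √(v r - v0) := by
  have hvL : IntervalIntegrable v volume 0 L :=
    hv.trans (intervalIntegrable_of_eq_zero_of_ge hvsupp le_rfl haL)
  calc tunnelingAction B v0 v L ≤ agmonDist B v0 v 0 (2 * L) :=
        tunnelingAction_le_agmonDist (ha.trans haL) hvL hvub fun r hr ↦ hvsupp r (haL.trans hr)
    _ ≤ B * (2 * L) ^ 2 / 4 + √(-v0) * (2 * L - a) + ∫ r in (0 : ℝ)..a, √(v r - v0) :=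
        agmonDist_origin_le hB ha (by linarith) hv hvsupp
    _ = B * L ^ 2 + √(-v0) * (2 * L - a) + ∫ r in (0 : ℝ)..a, √(v r - v0) := by ring

end TunnelingAction

theorem stmt_2_general {B a L v0 : ℝ} {v : ℝ → ℝ} (hB : 0 ≤ B) (ha : 0 ≤ a) (haL : a ≤ L)
    (hv : IntervalIntegrable v volume 0 a) (hvlb : ∀ r, 0 ≤ r → v0 ≤ v r)
    (hvub : ∀ r, 0 ≤ r → v r ≤ 0) (hvsupp : ∀ r, a ≤ r → v r = 0) :
    B * L ^ 2 - B * L * a ≤ tunnelingAction B v0 v L ∧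
      tunnelingAction B v0 v L ≤
        B * L ^ 2 + 2 * √(-v0) * L + ∫ r in (0 : ℝ)..a, √(v r - v0) := by
  have hv0 : v0 ≤ 0 := (hvlb a ha).trans (hvub a ha)
  have upper := tunnelingAction_le (v0 := v0) hB ha haL hv (fun r hr ↦ hvub r hr.1) hvsupp
  have slack : 0 ≤ √(-v0) * a := by positivity
  exact ⟨le_tunnelingAction ha haL hv0 hv hvsupp, by linarith⟩

/-- `B L² - B L a ≤ S ≤ B L² + 2√(-v0) L + γ0` where
`γ0 = ∫_0^a √(v(r) - v0) dr`. -/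
theorem stmt_2 (B a L v0 : ℝ) (v : ℝ → ℝ)
    (hB : 0 < B) (ha : 0 < a) (haL : a < L) (hv0 : v0 < 0)
    (hv : Continuous v)
    (hvlb : ∀ r, 0 ≤ r → v0 ≤ v r) (hvub : ∀ r, 0 ≤ r → v r ≤ 0)
    (hvsupp : ∀ r, a ≤ r → v r = 0)
    (d : ℝ → ℝ → ℝ)
    (hd : ∀ r1 r2, d r1 r2 = ∫ r in r1..r2, Real.sqrt (B^2 * r^2 / 4 + v r - v0))
    (S : ℝ)
    (hS : S = 2 * d 0 L + ∫ r in (0:ℝ)..L,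
        (Real.sqrt (B^2 * (2*L - r)^2 / 4 - v0) - Real.sqrt (B^2 * r^2 / 4 - v0)))
    (γ0 : ℝ)
    (hγ0 : γ0 = ∫ r in (0:ℝ)..a, Real.sqrt (v r - v0)) :
    B * L^2 - B * L * a ≤ S ∧ S ≤ B * L^2 + 2 * Real.sqrt (-v0) * L + γ0 := by
  obtain rfl : d = agmonDist B v0 v := funext₂ hd
  subst hS hγ0
  exact stmt_2_general hB.le ha.le haL.le (hv.intervalIntegrable 0 a) hvlb hvub hvsupp
end

section
/- Let B > 0, L > 0, v0 < 0, ν ∈ ℝ, f(t) = (B·L²/4)·(1+2t) + ((−v0)/(2B))·log((1+t)/t), and t_L = (1/2)·(−1 + √(1 + 4(−v0)/(B²L²))). Then, as h → 0⁺, ∫_0^∞ e^{−f(t)/h} t^{ν−1} (1+t)^{−ν} dt = √(2πh/f''(t_L)) · e^{−f(t_L)/h} · t_L^{ν−1} (1+t_L)^{−ν} · (1 + o(1)); i.e. the ratio of the left-hand side to √(2πh/f''(t_L)) · e^{−f(t_L)/h} · t_L^{ν−1} (1+t_L)^{−ν} tends to 1 as h → 0⁺. -/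
open MeasureTheory Real Filter Topology

/-!
The substitution `t = exp x` turns the phase `f` into a convex function `φ` on `ℝ` and the amplitude
into a function of at most exponential growth. At the minimiser `x₀`, with `k = φ'' x₀ > 0`, the
rescaled increments `y ↦ (φ (x₀ + √h y) - φ x₀) / h` are convex and tend pointwise to `k y² / 2`.
In particular their values at `y = ±1` eventually exceed `k / 4`, and convexity propagates this to
the bound `k / 4 * (|y| - 1)` for all `y`, uniformly in `h`. Dominated convergence then yields the
Gaussian integral `√(2π / k)`. If `T = exp x₀` is the critical point of `f`, then `k = T² f''(T)`,
and the factor `T` is absorbed by the Jacobian `dt = exp x dx`.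
-/

section QuadraticMinimum

variable {φ : ℝ → ℝ} {x₀ k : ℝ}

lemma tendsto_sub_div_sq_nhdsNE {φ' : ℝ → ℝ} (hφ : ∀ᶠ x in 𝓝 x₀, HasDerivAt φ (φ' x) x)
    (hcrit : φ' x₀ = 0) (hφ' : HasDerivAt φ' k x₀) :
    Tendsto (fun u ↦ (φ (x₀ + u) - φ x₀) / u ^ 2) (𝓝[≠] 0) (𝓝 (k / 2)) := by
  have hshift : ∀ᶠ u in 𝓝 0, HasDerivAt (fun u ↦ φ (x₀ + u) - φ x₀) (φ' (x₀ + u)) u := by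
    have htranslate : Tendsto (fun u ↦ x₀ + u) (𝓝 0) (𝓝 x₀) := by
      simpa using (continuous_const_add x₀).tendsto 0
    filter_upwards [htranslate.eventually hφ] with u hu
    exact (hu.comp_const_add x₀ u).sub_const _
  refine HasDerivAt.lhopital_zero_nhdsNE (f' := fun u ↦ φ' (x₀ + u)) (g' := fun u ↦ 2 * u)
    (hshift.filter_mono nhdsWithin_le_nhds)
    (Eventually.of_forall fun u ↦ by simpa using hasDerivAt_pow 2 u) ?_ ?_ ?_ ?_
  · filter_upwards [self_mem_nhdsWithin] with u hu
    simpa using hu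
  · have hcont := hshift.self_of_nhds.continuousAt.tendsto
    simp only [add_zero, sub_self] at hcont
    exact hcont.mono_left nhdsWithin_le_nhds
  · have hcont := (continuous_pow (M := ℝ) 2).tendsto 0
    rw [zero_pow two_ne_zero] at hcont
    exact hcont.mono_left nhdsWithin_le_nhds
  · refine ((hasDerivAt_iff_tendsto_slope_zero.1 hφ').div_const 2).congr fun u ↦ ?_
    rw [hcrit, smul_eq_mul, sub_zero, inv_mul_eq_div, div_div, mul_comm u]

lemma tendsto_sqrt_nhdsGT_zero : Tendsto (√·) (𝓝[>] 0) (𝓝[>] 0) := by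
  refine tendsto_nhdsWithin_iff.2 ⟨?_, ?_⟩
  · simpa using (continuous_sqrt.tendsto 0).mono_left nhdsWithin_le_nhds
  · filter_upwards [self_mem_nhdsWithin] with h hh using sqrt_pos.2 hh

lemma tendsto_add_sqrt_mul_nhdsGT_zero (x₀ y : ℝ) :
    Tendsto (fun h ↦ x₀ + √h * y) (𝓝[>] 0) (𝓝 x₀) := by
  simpa using ((tendsto_sqrt_nhdsGT_zero.mono_right nhdsWithin_le_nhds).mul_const y).const_add x₀

lemma tendsto_sub_div_of_rescaling
    (hquad : Tendsto (fun u ↦ (φ (x₀ + u) - φ x₀) / u ^ 2) (𝓝[≠] 0) (𝓝 (k / 2))) (y : ℝ) :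
    Tendsto (fun h ↦ (φ (x₀ + √h * y) - φ x₀) / h) (𝓝[>] 0) (𝓝 (k / 2 * y ^ 2)) := by
  rcases eq_or_ne y 0 with rfl | hy
  · simp
  have hscale : Tendsto (fun h ↦ √h * y) (𝓝[>] 0) (𝓝[≠] 0) := by
    refine tendsto_nhdsWithin_iff.2 ⟨by simpa using tendsto_add_sqrt_mul_nhdsGT_zero 0 y, ?_⟩
    filter_upwards [self_mem_nhdsWithin] with h hh using mul_ne_zero (sqrt_pos.2 hh).ne' hy
  refine ((hquad.comp hscale).mul_const (y ^ 2)).congr' ?_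
  filter_upwards [self_mem_nhdsWithin] with h (hh : 0 < h)
  rw [Function.comp_apply, mul_pow, sq_sqrt hh.le]
  field_simp

lemma isMinOn_univ_of_convexOn_of_tendsto_sub_div_sq (hφ : ConvexOn ℝ Set.univ φ) (hk : 0 < k)
    (hquad : Tendsto (fun u ↦ (φ (x₀ + u) - φ x₀) / u ^ 2) (𝓝[≠] 0) (𝓝 (k / 2))) :
    IsMinOn φ Set.univ x₀ := by
  have hlocal : ∀ᶠ u in 𝓝 0, φ x₀ ≤ φ (x₀ + u) := by
    filter_upwards [eventually_nhdsWithin_iff.1 (hquad.eventually_const_lt (half_pos hk))]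
      with u hu
    rcases eq_or_ne u 0 with rfl | hne
    · simp
    · exact sub_nonneg.1 ((div_pos_iff_of_pos_right (by positivity)).1 (hu hne)).le
  have hmin : IsLocalMin φ x₀ := by
    have hcenter : Tendsto (fun x ↦ x - x₀) (𝓝 x₀) (𝓝 0) := by
      simpa using (continuous_sub_right x₀).tendsto x₀
    filter_upwards [hcenter.eventually hlocal] with x hx
    simpa using hx
  exact fun x _ ↦ IsMinOn.of_isLocalMin_of_convex_univ hmin hφ x

lemma mul_abs_sub_one_le_sub_of_convexOn {ψ : ℝ → ℝ} {m : ℝ} (hψ : ConvexOn ℝ Set.univ ψ)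
    (hmin : IsMinOn ψ Set.univ 0) (hm : 0 ≤ m) (hright : m ≤ ψ 1 - ψ 0)
    (hleft : m ≤ ψ (-1) - ψ 0) (y : ℝ) : m * (|y| - 1) ≤ ψ y - ψ 0 := by
  have hnonneg : 0 ≤ ψ y - ψ 0 := sub_nonneg.2 (hmin (Set.mem_univ y))
  rcases le_or_gt |y| 1 with hy | hy
  · exact (mul_nonpos_of_nonneg_of_nonpos hm (sub_nonpos.2 hy)).trans hnonneg
  suffices m * |y| ≤ ψ y - ψ 0 by linarith
  have secant {x z : ℝ} := hψ.secant_mono (Set.mem_univ 0) (Set.mem_univ x) (Set.mem_univ z)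
  rcases lt_abs.1 hy with hpos | hneg
  · have hslope := secant one_ne_zero (by linarith) hpos.le
    rw [sub_zero, sub_zero, div_one, le_div_iff₀ (by linarith)] at hslope
    rw [abs_of_pos (by linarith)]
    exact (mul_le_mul_of_nonneg_right hright (by linarith)).trans hslope
  · have hslope := secant (x := y) (z := -1) (by linarith) (by norm_num) (by linarith)
    rw [sub_zero, sub_zero, div_neg, div_one, div_le_iff_of_neg (by linarith)] at hslope
    rw [abs_of_neg (by linarith)]
    nlinarith

lemma eventually_mul_abs_sub_one_le_of_convexOn (hφ : ConvexOn ℝ Set.univ φ) (hk : 0 < k)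
    (hquad : Tendsto (fun u ↦ (φ (x₀ + u) - φ x₀) / u ^ 2) (𝓝[≠] 0) (𝓝 (k / 2))) :
    ∀ᶠ h in 𝓝[>] 0, ∀ y, k / 4 * (|y| - 1) ≤ (φ (x₀ + √h * y) - φ x₀) / h := by
  have hmin := isMinOn_univ_of_convexOn_of_tendsto_sub_div_sq hφ hk hquad
  have hlim {σ : ℝ} (hσ : σ ^ 2 = 1) :
      ∀ᶠ h in 𝓝[>] 0, k / 4 < (φ (x₀ + √h * σ) - φ x₀) / h :=
    (tendsto_sub_div_of_rescaling hquad σ).eventually_const_lt (by rw [hσ]; linarith)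
  filter_upwards [hlim (one_pow 2), hlim (neg_one_sq), self_mem_nhdsWithin]
    with h hright hleft (hh : 0 < h) y
  have hconv : ConvexOn ℝ Set.univ (fun y ↦ φ (x₀ + √h * y)) :=
    (hφ.translate_right x₀).comp_linearMap (LinearMap.mulLeft ℝ √h)
  rw [lt_div_iff₀ hh] at hright hleft
  rw [le_div_iff₀ hh, mul_right_comm]
  simpa using mul_abs_sub_one_le_sub_of_convexOn hconv (fun y _ ↦ by simpa using hmin trivial)
    (by positivity) (by simpa using hright.le) (by simpa using hleft.le) y

end QuadraticMinimum

lemma integrable_exp_neg_mul_abs {b : ℝ} (hb : 0 < b) : Integrable fun y : ℝ ↦ exp (-b * |y|) := by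
  rw [← integrableOn_univ, ← Set.Iic_union_Ioi (a := (0 : ℝ))]
  refine .union ((integrableOn_exp_mul_Iic hb 0).congr_fun (fun y hy ↦ ?_) measurableSet_Iic)
    ((integrableOn_exp_mul_Ioi (neg_lt_zero.2 hb) 0).congr_fun (fun y hy ↦ ?_) measurableSet_Ioi)
  · simp only [abs_of_nonpos (Set.mem_Iic.1 hy), neg_mul_neg]
  · simp only [abs_of_pos (Set.mem_Ioi.1 hy)]

section Laplace

variable {E : Type*} [NormedAddCommGroup E] [NormedSpace ℝ E]

section RealLine

variable {φ : ℝ → ℝ} {g : ℝ → E} {x₀ k C K : ℝ}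

lemma eventually_norm_rescaled_integrand_le (hφ : ConvexOn ℝ Set.univ φ) (hk : 0 < k)
    (hquad : Tendsto (fun u ↦ (φ (x₀ + u) - φ x₀) / u ^ 2) (𝓝[≠] 0) (𝓝 (k / 2)))
    (hg : ∀ x, ‖g x‖ ≤ C * exp (K * |x|)) :
    ∀ᶠ h in 𝓝[>] 0, ∀ y,
      ‖exp (-((φ (x₀ + √h * y) - φ x₀) / h)) • g (x₀ + √h * y)‖ ≤
        C * exp (|K| * |x₀| + k / 4) * exp (-(k / 8) * |y|) := by
  have hC : 0 ≤ C := by simpa using (norm_nonneg _).trans (hg 0)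
  have hsmall : ∀ᶠ h in 𝓝[>] 0, |K| * √h < k / 8 := by
    have hlim : Tendsto (fun h ↦ |K| * √h) (𝓝[>] 0) (𝓝 0) := by
      simpa [mul_comm] using tendsto_add_sqrt_mul_nhdsGT_zero 0 |K|
    exact hlim.eventually_lt_const (by positivity)
  filter_upwards [eventually_mul_abs_sub_one_le_of_convexOn hφ hk hquad, hsmall]
    with h hphase hKh y
  have hexponent : K * |x₀ + √h * y| ≤ |K| * |x₀| + k / 8 * |y| := calc
    K * |x₀ + √h * y| ≤ |K| * (|x₀| + |√h * y|) :=
      mul_le_mul (le_abs_self K) (abs_add_le _ _) (abs_nonneg _) (abs_nonneg _)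
    _ = |K| * |x₀| + |K| * √h * |y| := by rw [abs_mul, abs_of_nonneg (sqrt_nonneg h)]; ring
    _ ≤ |K| * |x₀| + k / 8 * |y| := by gcongr
  calc ‖exp (-((φ (x₀ + √h * y) - φ x₀) / h)) • g (x₀ + √h * y)‖
      = exp (-((φ (x₀ + √h * y) - φ x₀) / h)) * ‖g (x₀ + √h * y)‖ := by
        rw [norm_smul, norm_of_nonneg (exp_pos _).le]
    _ ≤ exp (-(k / 4 * (|y| - 1))) * (C * exp (|K| * |x₀| + k / 8 * |y|)) := by
        gcongr
        · exact hphase y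
        · exact (hg _).trans (by gcongr)
    _ = C * exp (-(k / 4 * (|y| - 1)) + (|K| * |x₀| + k / 8 * |y|)) := by
        rw [mul_left_comm, ← exp_add]
    _ = C * exp (|K| * |x₀| + k / 4) * exp (-(k / 8) * |y|) := by
        rw [mul_assoc, ← exp_add]; congr 2; ring

variable [CompleteSpace E]

lemma integral_exp_neg_half_mul_sq_smul (k : ℝ) (v : E) :
    ∫ y : ℝ, exp (-(k / 2 * y ^ 2)) • v = √(2 * π / k) • v := by
  simp_rw [integral_smul_const, ← neg_mul, integral_gaussian]
  rw [div_div_eq_mul_div, mul_comm π]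

theorem tendsto_integral_rescaled_of_convexOn (hφ : ConvexOn ℝ Set.univ φ) (hk : 0 < k)
    (hquad : Tendsto (fun u ↦ (φ (x₀ + u) - φ x₀) / u ^ 2) (𝓝[≠] 0) (𝓝 (k / 2)))
    (hgm : AEStronglyMeasurable g) (hgc : ContinuousAt g x₀)
    (hg : ∀ x, ‖g x‖ ≤ C * exp (K * |x|)) :
    Tendsto (fun h ↦ ∫ y, exp (-((φ (x₀ + √h * y) - φ x₀) / h)) • g (x₀ + √h * y))
      (𝓝[>] 0) (𝓝 (√(2 * π / k) • g x₀)) := by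
  have hφc : Continuous φ := continuousOn_univ.1 (hφ.continuousOn isOpen_univ)
  rw [← integral_exp_neg_half_mul_sq_smul]
  refine tendsto_integral_filter_of_dominated_convergence _ ?_
    ((eventually_norm_rescaled_integrand_le hφ hk hquad hg).mono fun _ ↦ Eventually.of_forall)
    ((integrable_exp_neg_mul_abs (by positivity)).const_mul _) (Eventually.of_forall fun y ↦ ?_)
  · filter_upwards [self_mem_nhdsWithin] with h (hh : 0 < h)
    have hqmp : Measure.QuasiMeasurePreserving (fun y ↦ x₀ + √h * y) :=
      (measurePreserving_add_left volume x₀).quasiMeasurePreserving.comp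
        (Measure.quasiMeasurePreserving_smul volume (sqrt_pos.2 hh).ne')
    exact Continuous.aestronglyMeasurable (by fun_prop) |>.smul
      (hgm.comp_quasiMeasurePreserving hqmp)
  · exact ((continuous_exp.tendsto _).comp (tendsto_sub_div_of_rescaling hquad y).neg).smul
      (hgc.tendsto.comp (tendsto_add_sqrt_mul_nhdsGT_zero x₀ y))

theorem tendsto_laplace_of_convexOn (hφ : ConvexOn ℝ Set.univ φ) (hk : 0 < k)
    (hquad : Tendsto (fun u ↦ (φ (x₀ + u) - φ x₀) / u ^ 2) (𝓝[≠] 0) (𝓝 (k / 2)))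
    (hgm : AEStronglyMeasurable g) (hgc : ContinuousAt g x₀)
    (hg : ∀ x, ‖g x‖ ≤ C * exp (K * |x|)) :
    Tendsto (fun h ↦ (√h)⁻¹ • ∫ x, exp (-((φ x - φ x₀) / h)) • g x)
      (𝓝[>] 0) (𝓝 (√(2 * π / k) • g x₀)) := by
  refine (tendsto_integral_rescaled_of_convexOn hφ hk hquad hgm hgc hg).congr fun h ↦ ?_
  rw [Measure.integral_comp_mul_left (fun z ↦ exp (-((φ (x₀ + z) - φ x₀) / h)) • g (x₀ + z)),
    integral_add_left_eq_self (fun x ↦ exp (-((φ x - φ x₀) / h)) • g x),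
    abs_of_nonneg (inv_nonneg.2 (sqrt_nonneg h))]

end RealLine

section HalfLine

variable {f f' : ℝ → ℝ} {T D C K : ℝ}

lemma integral_exp_smul_comp_exp (G : ℝ → E) :
    ∫ x, exp x • G (exp x) = ∫ t in Set.Ioi 0, G t := by
  rw [← range_exp, ← Set.image_univ, integral_image_eq_integral_abs_deriv_smul .univ
    (fun x _ ↦ (hasDerivAt_exp x).hasDerivWithinAt) exp_injective.injOn, setIntegral_univ]
  simp only [abs_exp]

lemma hasDerivAt_exp_mul_comp_exp_log (hT : 0 < T) (hcrit : f' T = 0) (hf' : HasDerivAt f' D T) :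
    HasDerivAt (fun x ↦ f' (exp x) * exp x) (T ^ 2 * D) (log T) := by
  rw [← exp_log hT] at hf'
  refine ((hf'.comp _ (hasDerivAt_exp _)).mul (hasDerivAt_exp _)).congr_deriv ?_
  simp only [Function.comp_apply, exp_log hT, hcrit]
  ring

theorem tendsto_laplace_Ioi_of_convexOn_comp_exp [CompleteSpace E] {G : ℝ → E}
    (hconv : ConvexOn ℝ Set.univ fun x ↦ f (exp x)) (hT : 0 < T)
    (hf : ∀ᶠ t in 𝓝 T, HasDerivAt f (f' t) t) (hcrit : f' T = 0) (hf' : HasDerivAt f' D T)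
    (hD : 0 < D) (hGc : ContinuousOn G (Set.Ioi 0))
    (hG : ∀ t, 0 < t → ‖t • G t‖ ≤ C * exp (K * |log t|)) :
    Tendsto (fun h ↦ (√h)⁻¹ • ∫ t in Set.Ioi 0, exp (-((f t - f T) / h)) • G t)
      (𝓝[>] 0) (𝓝 (√(2 * π / D) • G T)) := by
  have hderiv : ∀ᶠ x in 𝓝 (log T), HasDerivAt (fun x ↦ f (exp x)) (f' (exp x) * exp x) x := by
    have hexp : Tendsto exp (𝓝 (log T)) (𝓝 T) := by
      simpa [exp_log hT] using continuous_exp.tendsto (log T)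
    filter_upwards [hexp.eventually hf] with x hx using hx.comp x (hasDerivAt_exp x)
  have hquad := tendsto_sub_div_sq_nhdsNE hderiv (by rw [exp_log hT, hcrit, zero_mul])
    (hasDerivAt_exp_mul_comp_exp_log hT hcrit hf')
  have hgc : Continuous fun x ↦ exp x • G (exp x) :=
    continuous_exp.smul (hGc.comp_continuous continuous_exp exp_pos)
  have hlim := tendsto_laplace_of_convexOn hconv (by positivity) hquad hgc.aestronglyMeasurable
    hgc.continuousAt fun x ↦ by simpa using hG (exp x) (exp_pos x)
  have hconst : √(2 * π / (T ^ 2 * D)) * T = √(2 * π / D) := by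
    rw [mul_comm (T ^ 2), ← div_div, sqrt_div' _ (sq_nonneg T), sqrt_sq hT.le,
      div_mul_cancel₀ _ hT.ne']
  rw [exp_log hT, smul_smul, hconst] at hlim
  refine hlim.congr fun h ↦ ?_
  simp_rw [← integral_exp_smul_comp_exp, smul_comm (exp _) (exp (-_))]

theorem isEquivalent_laplace_Ioi_of_convexOn_comp_exp {G : ℝ → ℝ}
    (hconv : ConvexOn ℝ Set.univ fun x ↦ f (exp x)) (hT : 0 < T)
    (hf : ∀ᶠ t in 𝓝 T, HasDerivAt f (f' t) t) (hcrit : f' T = 0) (hf' : HasDerivAt f' D T)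
    (hD : 0 < D) (hGc : ContinuousOn G (Set.Ioi 0)) (hGT : G T ≠ 0)
    (hG : ∀ t, 0 < t → |t * G t| ≤ C * exp (K * |log t|)) :
    Asymptotics.IsEquivalent (𝓝[>] 0) (fun h ↦ ∫ t in Set.Ioi 0, exp (-f t / h) * G t)
      (fun h ↦ √(2 * π * h / D) * exp (-f T / h) * G T) := by
  have hlim := tendsto_laplace_Ioi_of_convexOn_comp_exp hconv hT hf hcrit hf' hD hGc hG
  have hequiv := ((Asymptotics.isEquivalent_const_iff_tendsto
    (smul_ne_zero (by positivity) hGT)).2 hlim).mul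
    (Asymptotics.IsEquivalent.refl (u := fun h ↦ √h * exp (-f T / h)))
  refine (hequiv.congr_left ?_).congr_right ?_
  · filter_upwards [self_mem_nhdsWithin] with h (hh : 0 < h)
    have hfactor (t : ℝ) :
        exp (-f t / h) * G t = exp (-f T / h) * (exp (-((f t - f T) / h)) * G t) := by
      rw [← mul_assoc, ← exp_add]; congr 2; ring
    simp_rw [hfactor, integral_const_mul, Pi.mul_apply, smul_eq_mul]
    field_simp
  · filter_upwards [self_mem_nhdsWithin] with h (_ : 0 < h)
    rw [Pi.mul_apply, Function.const_apply, smul_eq_mul,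
      mul_div_right_comm (2 * π) h, sqrt_mul (by positivity)]
    ring

end HalfLine

end Laplace

section TricomiPhase

variable {a c t : ℝ}

/-- The phase of Tricomi's confluent hypergeometric integral
`∫ exp (-z t) t ^ (α - 1) (1 + t) ^ (β - α - 1) dt` when `z` and `α` are both large:
`exp (-tricomiPhase a c t / h)` is a multiple of `exp (-2 a t / h) * (t / (1 + t)) ^ (c / h)`.
The constant `a` is kept in the phase. It is meant for `t > 0`. -/
noncomputable def tricomiPhase (a c t : ℝ) : ℝ := a * (1 + 2 * t) + c * log ((1 + t) / t)

lemma hasDerivAt_tricomiPhase (a c : ℝ) (ht : 0 < t) :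
    HasDerivAt (tricomiPhase a c) (2 * a - c / (t * (1 + t))) t := by
  have hlin := (((hasDerivAt_id t).const_mul 2).const_add 1).const_mul a
  have hlog := ((((hasDerivAt_id t).const_add 1).div (hasDerivAt_id t) ht.ne').log
    (by simp only [Pi.div_apply, id]; positivity)).const_mul c
  refine (hlin.add hlog).congr_deriv ?_
  simp only [Pi.div_apply, id, mul_one, one_mul]
  field_simp
  ring

lemma hasDerivAt_deriv_tricomiPhase (a c : ℝ) (ht : 0 < t) :
    HasDerivAt (fun t ↦ 2 * a - c / (t * (1 + t))) (c * (1 + 2 * t) / (t * (1 + t)) ^ 2) t := by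
  have hprod := (hasDerivAt_id t).mul ((hasDerivAt_id t).const_add 1)
  refine (((hasDerivAt_const t c).div hprod (by simp only [Pi.mul_apply, id]; positivity)).const_sub
    (2 * a)).congr_deriv ?_
  simp only [Pi.mul_apply, id]
  ring

lemma convexOn_tricomiPhase_comp_exp (ha : 0 ≤ a) (hc : 0 ≤ c) :
    ConvexOn ℝ Set.univ fun x ↦ tricomiPhase a c (exp x) := by
  have hderiv (x : ℝ) : HasDerivAt (fun x ↦ tricomiPhase a c (exp x))
      (2 * a * exp x - c / (1 + exp x)) x := by
    refine ((hasDerivAt_tricomiPhase a c (exp_pos x)).comp x (hasDerivAt_exp x)).congr_deriv ?_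
    field_simp
  refine Monotone.convexOn_univ_of_deriv (fun x ↦ (hderiv x).differentiableAt) fun x y hxy ↦ ?_
  rw [(hderiv x).deriv, (hderiv y).deriv]
  gcongr

lemma abs_mul_rpow_mul_one_add_rpow_le (α β : ℝ) (ht : 0 < t) :
    |t * (t ^ α * (1 + t) ^ β)| ≤
      exp (|β| * log 2) * exp ((|α + 1| + |β|) * |log t|) := by
  have hlog_nonneg : 0 ≤ log (1 + t) := log_nonneg (by linarith)
  have hlog_le : log (1 + t) ≤ log 2 + |log t| := by
    rw [log_le_iff_le_exp (by positivity), exp_add, exp_log two_pos]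
    have ht_le : t ≤ exp |log t| := (exp_log ht).symm.le.trans (exp_le_exp.2 (le_abs_self _))
    linarith [one_le_exp (abs_nonneg (log t))]
  have hrpow : t * (t ^ α * (1 + t) ^ β) = exp ((α + 1) * log t + β * log (1 + t)) := by
    rw [← mul_assoc, mul_comm t, ← rpow_add_one ht.ne', rpow_def_of_pos ht,
      rpow_def_of_pos (by positivity), ← exp_add, mul_comm (log t), mul_comm (log (1 + t))]
  rw [hrpow, abs_exp, ← exp_add, exp_le_exp]
  calc (α + 1) * log t + β * log (1 + t)
      ≤ |α + 1| * |log t| + |β| * (log 2 + |log t|) := by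
        refine add_le_add ((le_abs_self _).trans (abs_mul _ _).le) ?_
        exact mul_le_mul (le_abs_self β) hlog_le hlog_nonneg (abs_nonneg β)
    _ = |β| * log 2 + (|α + 1| + |β|) * |log t| := by ring

theorem isEquivalent_integral_tricomiPhase {T : ℝ} (α β : ℝ) (ha : 0 < a) (hT : 0 < T)
    (hcrit : 2 * a * (T * (1 + T)) = c) :
    Asymptotics.IsEquivalent (𝓝[>] 0)
      (fun h ↦ ∫ t in Set.Ioi 0, exp (-tricomiPhase a c t / h) * (t ^ α * (1 + t) ^ β))
      (fun h ↦ √(2 * π * h / (c * (1 + 2 * T) / (T * (1 + T)) ^ 2)) *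
        exp (-tricomiPhase a c T / h) * (T ^ α * (1 + T) ^ β)) := by
  have hc : 0 < c := hcrit ▸ by positivity
  refine isEquivalent_laplace_Ioi_of_convexOn_comp_exp
    (convexOn_tricomiPhase_comp_exp ha.le hc.le) hT
    ((eventually_gt_nhds hT).mono fun t ht ↦ hasDerivAt_tricomiPhase a c ht) ?_
    (hasDerivAt_deriv_tricomiPhase a c hT) (by positivity) ?_ (by positivity)
    (fun t ht ↦ abs_mul_rpow_mul_one_add_rpow_le α β ht)
  · rw [sub_eq_zero, eq_div_iff (by positivity), hcrit]
  · refine ContinuousOn.mul (continuousOn_id.rpow_const fun t ht ↦ Or.inl (Set.mem_Ioi.1 ht).ne')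
      (ContinuousOn.rpow_const (by fun_prop) fun t ht ↦ Or.inl ?_)
    linarith [Set.mem_Ioi.1 ht]

end TricomiPhase

lemma half_neg_one_add_sqrt_pos {q : ℝ} (hq : 0 < q) : 0 < 1 / 2 * (-1 + √(1 + 4 * q)) := by
  have hsqrt : 1 < √(1 + 4 * q) := by
    rw [lt_sqrt zero_le_one]
    linarith
  linarith

lemma half_neg_one_add_sqrt_mul_one_add {q : ℝ} (hq : 0 ≤ 1 + 4 * q) :
    1 / 2 * (-1 + √(1 + 4 * q)) * (1 + 1 / 2 * (-1 + √(1 + 4 * q))) = q := by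
  linear_combination 1 / 4 * sq_sqrt hq

lemma sqrt_sq_mul_sq_add_four_mul {B L w T : ℝ} (hB : 0 < B) (hL : 0 < L)
    (hT : 0 < T) (hcrit : T * (1 + T) = w / (B ^ 2 * L ^ 2)) :
    √(B ^ 2 * L ^ 2 + 4 * w) = B * L * (1 + 2 * T) := by
  rw [eq_div_iff (by positivity)] at hcrit
  rw [sqrt_eq_iff_mul_self_eq_of_pos (by positivity)]
  linear_combination 4 * hcrit

/-- Laplace method for `∫_0^∞ e^{-f(t)/h} t^{ν-1}(1+t)^{-ν} dt`: as `h → 0⁺`,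
the integral equals `√(2πh/f''(t_L)) e^{-f(t_L)/h} t_L^{ν-1}(1+t_L)^{-ν} (1+o(1))`. -/
theorem stmt_9 (B L v0 ν : ℝ) (hB : 0 < B) (hL : 0 < L) (hv0 : v0 < 0)
    (f : ℝ → ℝ)
    (hf : ∀ t, 0 < t → f t = B * L^2 / 4 * (1 + 2*t) + (-v0) / (2*B) * Real.log ((1+t)/t))
    (tL : ℝ)
    (htL : tL = 1/2 * (-1 + Real.sqrt (1 + 4 * (-v0) / (B^2 * L^2))))
    (f''tL : ℝ)
    (hf''tL : f''tL = B^2 * L^3 / (2 * (-v0)) * Real.sqrt (B^2 * L^2 + 4 * (-v0))) :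
    Tendsto (fun h : ℝ =>
        (∫ t in Set.Ioi (0:ℝ), Real.exp (-(f t) / h) * t ^ (ν - 1) * (1 + t) ^ (-ν)) /
        (Real.sqrt (2 * π * h / f''tL) * Real.exp (-(f tL) / h) *
          tL ^ (ν - 1) * (1 + tL) ^ (-ν)))
      (𝓝[>] 0) (𝓝 1) := by
  have hw : 0 < -v0 := neg_pos.2 hv0
  have hq : 0 < -v0 / (B ^ 2 * L ^ 2) := by positivity
  rw [mul_div_assoc] at htL
  have hT : 0 < tL := htL ▸ half_neg_one_add_sqrt_pos hq
  have hroot : tL * (1 + tL) = -v0 / (B ^ 2 * L ^ 2) :=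
    htL ▸ half_neg_one_add_sqrt_mul_one_add (by positivity)
  have hcrit : 2 * (B * L ^ 2 / 4) * (tL * (1 + tL)) = -v0 / (2 * B) := by
    rw [hroot]; field_simp; norm_num
  have hD : f''tL = -v0 / (2 * B) * (1 + 2 * tL) / (tL * (1 + tL)) ^ 2 := by
    rw [hf''tL, sqrt_sq_mul_sq_add_four_mul hB hL hT hroot, hroot]; field_simp
  have hphase : Set.EqOn f (tricomiPhase (B * L ^ 2 / 4) (-v0 / (2 * B))) (Set.Ioi 0) := hf
  have hequiv := isEquivalent_integral_tricomiPhase (ν - 1) (-ν) (by positivity) hT hcrit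
  rw [← hphase hT, ← hD] at hequiv
  refine ((Asymptotics.isEquivalent_iff_tendsto_one ?_).1 hequiv).congr fun h ↦ ?_
  · filter_upwards [self_mem_nhdsWithin] with h (hh : 0 < h)
    rw [hD]; positivity
  · rw [Pi.div_apply, ← mul_assoc (√_ * _)]
    congr 1
    exact setIntegral_congr_fun measurableSet_Ioi fun t ht ↦ by simp only [hphase ht, mul_assoc]
end
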